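/- Let 0 < c and ū > 0, and set s := √((2ū+c)·c), ρ(ū) := (c/ū²)·(ū + c + s), and α := 1/(1 + ρ(ū)). Then: (i) (1−α)·(ū−c) + (1 − √(2·α·(1−α)))·c = 2·α·c, i.e., α equates the maximal regret from searching with the regret 2αc from the no-treasure scenario; (ii) for fixed c > 0, the function ū ↦ ρ(ū) is strictly decreasing on (0,∞) and ρ(4c) = 1/2; consequently, if ū > 4c then α > 2/3. -/

import Mathlib

/-- The likelihood ratio `ρ(ū) = (c/ū²)(ū + c + √((2ū+c)c))` of the two-box
saddle point. -/
noncomputable def likelihoodRatio (c x : ℝ) : ℝ :=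
  (c / x ^ 2) * (x + c + Real.sqrt ((2 * x + c) * c))

/-!
In terms of the likelihood ratio `p = (1 - α) / α`, the regret equation multiplied by `1 + p`
becomes `p * ū = c * (1 + √(2 * p))`, which is explicit in `ū`: the reward that balances the two
regrets is `c * (1 + √(2 * p)) / p = c * (1 / p + 2 / √(2 * p))`, visibly decreasing in `p`. The
formula for `ρ` inverts this function, because `√(2 * ρ(ū)) = (c + √((2ū + c)c)) / ū`; hence `ρ` is
decreasing as well, and `ρ(4c) = 1 / 2` because `4c` is the balancing reward at `p = 1 / 2`.
-/

/-- The maximal reward `ū` at which, for search cost `c`, the likelihood ratio `p = (1 - α) / α`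
equates the maximal regret from searching with the regret `2αc` of the no-treasure scenario. For
`0 < c` it inverts `likelihoodRatio c` on `(0, ∞)`; its value `0` at `p = 0` is junk. -/
noncomputable def indifferenceReward (c p : ℝ) : ℝ :=
  c * (1 + √(2 * p)) / p

lemma indifferenceReward_eq_mul_add (c p : ℝ) :
    indifferenceReward c p = c * (1 / p + 2 / √(2 * p)) := by
  have h : √(2 * p) / p = 2 / √(2 * p) :=
    calc √(2 * p) / p = 2 * (√(2 * p) / (2 * p)) := by ring
      _ = 2 / √(2 * p) := by rw [Real.sqrt_div_self]; ring
  rw [indifferenceReward, mul_div_assoc, add_div, h]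

lemma strictAntiOn_indifferenceReward {c : ℝ} (hc : 0 < c) :
    StrictAntiOn (indifferenceReward c) (Set.Ioi 0) := by
  intro p (hp : 0 < p) q _ hpq
  rw [indifferenceReward_eq_mul_add, indifferenceReward_eq_mul_add]
  gcongr

lemma indifferenceReward_one_half (c : ℝ) : indifferenceReward c (1 / 2) = 4 * c := by
  rw [indifferenceReward, mul_one_div_cancel two_ne_zero, Real.sqrt_one]
  ring

lemma sqrt_two_mul_inv_one_add_mul_one_sub {p : ℝ} (hp : 0 < 1 + p) :
    √(2 * (1 / (1 + p)) * (1 - 1 / (1 + p))) = √(2 * p) / (1 + p) := by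
  have h : 2 * (1 / (1 + p)) * (1 - 1 / (1 + p)) = 2 * p / (1 + p) ^ 2 := by
    field_simp
    ring
  rw [h, Real.sqrt_div' _ (sq_nonneg _), Real.sqrt_sq hp.le]

lemma regret_balance_iff {p : ℝ} (hp : 0 < p) (c u : ℝ) :
    (1 - 1 / (1 + p)) * (u - c) + (1 - √(2 * (1 / (1 + p)) * (1 - 1 / (1 + p)))) * c
      = 2 * (1 / (1 + p)) * c ↔ u = indifferenceReward c p := by
  have hdiff : (1 - 1 / (1 + p)) * (u - c)
        + (1 - √(2 * (1 / (1 + p)) * (1 - 1 / (1 + p)))) * c - 2 * (1 / (1 + p)) * c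
      = (u * p - c * (1 + √(2 * p))) / (1 + p) := by
    rw [sqrt_two_mul_inv_one_add_mul_one_sub (by positivity)]
    field_simp
    ring
  have hp' : 1 + p ≠ 0 := by positivity
  rw [← sub_eq_zero, hdiff, div_eq_zero_iff, or_iff_left hp', sub_eq_zero, indifferenceReward,
    eq_div_iff hp.ne']

lemma likelihoodRatio_pos {c x : ℝ} (hc : 0 < c) (hx : 0 < x) : 0 < likelihoodRatio c x := by
  unfold likelihoodRatio
  positivity

lemma sqrt_two_mul_likelihoodRatio {c x : ℝ} (hc : 0 ≤ c) (hx : 0 ≤ x) :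
    √(2 * likelihoodRatio c x) = (c + √((2 * x + c) * c)) / x := by
  have hs : √((2 * x + c) * c) ^ 2 = (2 * x + c) * c := Real.sq_sqrt (by positivity)
  have hsq : 2 * likelihoodRatio c x = ((c + √((2 * x + c) * c)) / x) ^ 2 := by
    rw [likelihoodRatio, div_pow, add_sq, hs]
    ring
  rw [hsq, Real.sqrt_sq (by positivity)]

lemma indifferenceReward_likelihoodRatio {c x : ℝ} (hc : 0 < c) (hx : 0 < x) :
    indifferenceReward c (likelihoodRatio c x) = x := by
  rw [indifferenceReward, div_eq_iff (likelihoodRatio_pos hc hx).ne',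
    sqrt_two_mul_likelihoodRatio hc.le hx.le, likelihoodRatio]
  field_simp
  ring

lemma likelihoodRatio_indifferenceReward {c p : ℝ} (hc : 0 < c) (hp : 0 < p) :
    likelihoodRatio c (indifferenceReward c p) = p := by
  have hx : 0 < indifferenceReward c p := by
    unfold indifferenceReward
    positivity
  exact (strictAntiOn_indifferenceReward hc).injOn (likelihoodRatio_pos hc hx) hp
    (indifferenceReward_likelihoodRatio hc hx)

lemma strictAntiOn_likelihoodRatio {c : ℝ} (hc : 0 < c) :
    StrictAntiOn (likelihoodRatio c) (Set.Ioi 0) := by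
  intro x hx y hy hxy
  rwa [← (strictAntiOn_indifferenceReward hc).lt_iff_gt (likelihoodRatio_pos hc hx)
    (likelihoodRatio_pos hc hy), indifferenceReward_likelihoodRatio hc hx,
    indifferenceReward_likelihoodRatio hc hy]

lemma likelihoodRatio_four_mul {c : ℝ} (hc : 0 < c) : likelihoodRatio c (4 * c) = 1 / 2 := by
  rw [← indifferenceReward_one_half, likelihoodRatio_indifferenceReward hc one_half_pos]

/-- With `α = 1/(1 + ρ(ū))`:
(i) `(1-α)(ū-c) + (1-√(2α(1-α)))c = 2αc`, i.e. `α` equates the maximal regret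
from searching with the regret `2αc` of the no-treasure scenario;
(ii) `ρ` is strictly decreasing on `(0,∞)` and `ρ(4c) = 1/2`; consequently if
`ū > 4c` then `α > 2/3`. -/
theorem two_box_initial_search_probability (c ubar : ℝ) (hc : 0 < c) (hu : 0 < ubar) :
    ((1 - 1 / (1 + likelihoodRatio c ubar)) * (ubar - c)
        + (1 - Real.sqrt (2 * (1 / (1 + likelihoodRatio c ubar))
            * (1 - 1 / (1 + likelihoodRatio c ubar)))) * c
      = 2 * (1 / (1 + likelihoodRatio c ubar)) * c) ∧
    StrictAntiOn (likelihoodRatio c) (Set.Ioi 0) ∧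
    likelihoodRatio c (4 * c) = 1 / 2 ∧
    (4 * c < ubar → 2 / 3 < 1 / (1 + likelihoodRatio c ubar)) := by
  have hρ := likelihoodRatio_pos hc hu
  refine ⟨?_, strictAntiOn_likelihoodRatio hc, likelihoodRatio_four_mul hc, fun hlt ↦ ?_⟩
  · exact (regret_balance_iff hρ c ubar).2 (indifferenceReward_likelihoodRatio hc hu).symm
  · have hρ_lt : likelihoodRatio c ubar < 1 / 2 :=
      likelihoodRatio_four_mul hc ▸
        strictAntiOn_likelihoodRatio hc (Set.mem_Ioi.2 (by positivity)) hu hlt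
    rw [lt_div_iff₀ (by positivity)]
    linarith
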